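/- Let A = (Q, Σ, δ, ρ) be a connected invertible-reversible Mealy automaton with #Q = 3 whose group ⟨A⟩ is infinite. Then there exists an infinite word w = w_1 w_2 ⋯ over Q whose label sequence (ℓ(w_1⋯w_i))_{i≥1} is either constantly equal to 3, or equal to 3 for i ≤ n and to 2 for i > n, for some integer n (the orbit tree of the dual admits a branch labeled 3^ω or 3^n 2^ω). -/

import Mathlib

/-!
If every level is transitive, any infinite word has all labels 3. Otherwise let `c + 1` be the
first level that is not transitive. By transitivity of level `c`, the partition of the three next
letters into stabilizer-orbits has the same shape after every word of length `c`: either `1+1+1` or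
`2+1`. In the first case all later labels are 1, and all orbits are bounded. A word `v` whose orbit
is in bijection with the orbit of its length-`n` prefix is a state of an automaton on at most
`#Q^n` states, so there are only finitely many `ρ_v` of this kind
(`finite_rWord_of_prefix_determines`), and the group is finite.

In the case `2+1`, let `F s` be the isolated letter after a word `s` of length `c`, and call a word
orbital when it has no factor `s (F s)`. If all orbital words have label 2 from level `c` on, any
infinite orbital word is a branch `3^c 2^ω`. Otherwise let `n` be the least length after which an
orbital word gets label 1. The orbital words of length `n` form one orbit (`orbital_inOrbit`), so
all longer orbital words get label 1, and the orbital words `w` produce only finitely many `ρ_w`.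

It remains to pass from orbital words to all words (`finite_range_rWord`). Consider the vertices
`(ρ_w, s)`, with `s` the last `c` letters of `w`, and the maps `M k` appending the letter at cyclic
distance `k` from `F s`. The key fact is that `x ↦ F (x g)` is a permutation of `Q` for every `g` of
length `c - 1` (`IsSingular.bijective`). It makes the `M k` injective and gives
`M 0 = M 1 ∘ (M 2)⁻¹ ∘ M 1`. The finite set of vertices of orbital words is stable under `M 1` and
`M 2`, hence under `(M 2)⁻¹`, hence under `M 0`, so it contains the vertices of all words of length
at least `c`, and the group is finite.
-/

namespace MealyFormal

variable {Q X : Type*}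

/-- Extended transition function of the dual automaton: the action of a letter
`i ∈ Σ` on words over the stateset `Q`, defined by
`δ_i(ε) = ε` and `δ_i(x w) = δ_i(x) δ_{ρ_x(i)}(w)`. -/
def dExt (δ : X → Q → Q) (ρ : Q → X → X) : X → List Q → List Q
  | _, [] => []
  | i, x :: w => δ i x :: dExt δ ρ (ρ x i) w

/-- The action `δ_s = δ_{s_n} ∘ ⋯ ∘ δ_{s_1}` of a word `s` over `Σ` on words over `Q`. -/
def dWord (δ : X → Q → Q) (ρ : Q → X → X) : List X → List Q → List Q
  | [], u => u
  | i :: s, u => dWord δ ρ s (dExt δ ρ i u)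

/-- Extended production function: the action of a state `x ∈ Q` on words over the
alphabet `Σ`, defined by `ρ_x(ε) = ε` and `ρ_x(i s) = ρ_x(i) ρ_{δ_i(x)}(s)`. -/
def rExt (δ : X → Q → Q) (ρ : Q → X → X) : Q → List X → List X
  | _, [] => []
  | x, i :: s => ρ x i :: rExt δ ρ (δ i x) s

/-- The action `ρ_u = ρ_{x_n} ∘ ⋯ ∘ ρ_{x_1}` of a word `u = x_1⋯x_n` over `Q`
on words over `Σ`. -/
def rWord (δ : X → Q → Q) (ρ : Q → X → X) : List Q → List X → List X
  | [], s => s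
  | x :: u, s => rWord δ ρ u (rExt δ ρ x s)

/-- `v` lies in the orbit of `u` under the action of the dual automaton. -/
def InOrbit (δ : X → Q → Q) (ρ : Q → X → X) (u v : List Q) : Prop :=
  ∃ s : List X, dWord δ ρ s u = v

/-- The orbit (connected component of the corresponding power) of a word over `Q`. -/
def orbit (δ : X → Q → Q) (ρ : Q → X → X) (u : List Q) : Set (List Q) :=
  {v | InOrbit δ ρ u v}

/-- The action of the dual automaton on `Q^n` is transitive, i.e. `A^n` is connected. -/
def LevelTransitive (δ : X → Q → Q) (ρ : Q → X → X) (n : ℕ) : Prop :=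
  ∀ u v : List Q, u.length = n → v.length = n → InOrbit δ ρ u v

/-- The label `ℓ(u x)` of the nonempty word `u x`:
the number of `z ∈ Q` with `u z` in the orbit of `u x`. -/
noncomputable def label (δ : X → Q → Q) (ρ : Q → X → X) (u : List Q) (x : Q) : ℕ :=
  Set.ncard {z : Q | InOrbit δ ρ (u ++ [x]) (u ++ [z])}

/-- Prefix of length `i` of the (infinite) word `w = w_1 w_2 ⋯`. -/
def pref (w : ℕ → Q) (i : ℕ) : List Q := (List.range i).map w

/-- The `n`-th power `u^n` of a word `u`. -/
def wpow (u : List Q) (n : ℕ) : List Q := (List.replicate n u).flatten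

/-- The group generated by the Mealy automaton: the subgroup of permutations of `Σ*`
generated by the production functions `ρ_x`, `x ∈ Q`. -/
def autGroup (δ : X → Q → Q) (ρ : Q → X → X) : Subgroup (Equiv.Perm (List X)) :=
  Subgroup.closure {π : Equiv.Perm (List X) | ∃ q : Q, ⇑π = rExt δ ρ q}

/-- The semigroup of maps `Σ* → Σ*` generated under composition by the `ρ_x`, `x ∈ Q`. -/
def prodSemigroup (δ : X → Q → Q) (ρ : Q → X → X) :
    Subsemigroup (Function.End (List X)) :=
  Subsemigroup.closure {f : Function.End (List X) | ∃ q : Q, f = rExt δ ρ q}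

/-- The semigroup of maps `Q* → Q*` generated under composition by the `δ_i`, `i ∈ Σ`. -/
def dualSemigroup (δ : X → Q → Q) (ρ : Q → X → X) :
    Subsemigroup (Function.End (List Q)) :=
  Subsemigroup.closure {f : Function.End (List Q) | ∃ i : X, f = dExt δ ρ i}

/-- A word `w` over `Q` is orbital if all its factors of length `c+1`
belong to the reduction orbit `O2`. -/
def Orbital (c : ℕ) (O2 : Set (List Q)) (w : List Q) : Prop :=
  ∀ f : List Q, f.length = c + 1 → f <:+: w → f ∈ O2

/-- A word is cyclically orbital if each of its powers is orbital. -/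
def CycOrbital (c : ℕ) (O2 : Set (List Q)) (w : List Q) : Prop :=
  ∀ n : ℕ, Orbital c O2 (wpow w n)

/-- The standing setup: `A` is a connected invertible-reversible Mealy automaton
with 3 states, `0 < c = cd(A) < ∞`, and `Q^{c+1}` splits into exactly two orbits,
of sizes `2·3^c` and `3^c`; `O2` is the reduction orbit, of size `2·3^c`. -/
structure StandingSetup (δ : X → Q → Q) (ρ : Q → X → X) (c : ℕ) (O2 : Set (List Q)) :
    Prop where
  card_three : Nat.card Q = 3
  invertible : ∀ q : Q, Function.Bijective (ρ q)
  reversible : ∀ i : X, Function.Bijective (δ i)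
  connected : LevelTransitive δ ρ 1
  c_pos : 0 < c
  trans_c : LevelTransitive δ ρ c
  not_trans_succ : ¬ LevelTransitive δ ρ (c + 1)
  O2_is_orbit : ∃ w : List Q, w.length = c + 1 ∧ O2 = orbit δ ρ w
  O2_card : O2.ncard = 2 * 3 ^ c
  other_is_orbit : ∃ w : List Q, w.length = c + 1 ∧
    orbit δ ρ w = {v : List Q | v.length = c + 1} \ O2
  other_card : ({v : List Q | v.length = c + 1} \ O2).ncard = 3 ^ c



/-! ### The dual action on words -/

section Basic

variable {δ : X → Q → Q} {ρ : Q → X → X}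

theorem dExt_length (i : X) (u : List Q) : (dExt δ ρ i u).length = u.length := by
  induction u generalizing i with
  | nil => rfl
  | cons x w ih => simp [dExt, ih]

theorem dWord_length (s : List X) (u : List Q) : (dWord δ ρ s u).length = u.length := by
  induction s generalizing u with
  | nil => rfl
  | cons i s ih => simp [dWord, ih, dExt_length]

theorem dWord_nil (s : List X) : dWord δ ρ s [] = [] :=
  List.eq_nil_of_length_eq_zero (by simp [dWord_length])

theorem dWord_append_left (s t : List X) (u : List Q) :
    dWord δ ρ (s ++ t) u = dWord δ ρ t (dWord δ ρ s u) := by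
  induction s generalizing u with
  | nil => rfl
  | cons i s ih => simp [dWord, ih]

theorem dWord_cons (s : List X) (x : Q) (w : List Q) :
    dWord δ ρ s (x :: w) = s.foldl (fun q i => δ i q) x :: dWord δ ρ (rExt δ ρ x s) w := by
  induction s generalizing x w with
  | nil => rfl
  | cons i s ih => simp [dWord, dExt, rExt, ih]

/-- The cross-diagram rule: after acting on the prefix `u`, the word `s` acts on the rest
as `ρ_u(s)`. -/
theorem dWord_append (s : List X) (u v : List Q) :
    dWord δ ρ s (u ++ v) = dWord δ ρ s u ++ dWord δ ρ (rWord δ ρ u s) v := by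
  induction u generalizing s with
  | nil => simp [dWord_nil, rWord]
  | cons x u ih => simp [dWord_cons, rWord, ih]

theorem dWord_take (s : List X) (u : List Q) (n : ℕ) :
    (dWord δ ρ s u).take n = dWord δ ρ s (u.take n) := by
  conv_lhs => rw [← List.take_append_drop n u, dWord_append]
  by_cases h : n ≤ u.length
  · rw [List.take_append_of_le_length (by simp [dWord_length, h])]
    exact List.take_of_length_le (by simp [dWord_length])
  · have h' : u.length ≤ n := by omega
    simp [List.drop_of_length_le h', dWord_nil, List.take_of_length_le, h', dWord_length]

theorem rWord_append (u v : List Q) (s : List X) :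
    rWord δ ρ (u ++ v) s = rWord δ ρ v (rWord δ ρ u s) := by
  induction u generalizing s with
  | nil => rfl
  | cons x u ih => simp [rWord, ih]

theorem rWord_nil (u : List Q) : rWord δ ρ u [] = [] := by
  induction u with
  | nil => rfl
  | cons x u ih => simpa [rWord, rExt] using ih

/-- A word `v` over `Q`, seen as a state of a power of the automaton, outputs `ρ_v(i)` on the
letter `i` and moves to the state `δ_i(v)`. -/
theorem rWord_cons (v : List Q) (i : X) (t : List X) :
    rWord δ ρ v (i :: t) = v.foldl (fun j x => ρ x j) i :: rWord δ ρ (dExt δ ρ i v) t := by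
  induction v generalizing i t with
  | nil => rfl
  | cons x v ih => simp [rWord, rExt, dExt, ih]

theorem rExt_injective (hinv : ∀ q, Function.Bijective (ρ q)) (x : Q) :
    Function.Injective (rExt δ ρ x) := by
  intro s t h
  induction s generalizing x t with
  | nil => cases t with
    | nil => rfl
    | cons j t => simp [rExt] at h
  | cons i s ih => cases t with
    | nil => simp [rExt] at h
    | cons j t =>
      simp only [rExt, List.cons.injEq] at h
      obtain rfl := (hinv x).1 h.1
      rw [ih _ h.2]

theorem rExt_surjective (hinv : ∀ q, Function.Bijective (ρ q)) (x : Q) :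
    Function.Surjective (rExt δ ρ x) := by
  intro t
  induction t generalizing x with
  | nil => exact ⟨[], rfl⟩
  | cons j t ih =>
    obtain ⟨i, rfl⟩ := (hinv x).2 j
    obtain ⟨s, rfl⟩ := ih (δ i x)
    exact ⟨i :: s, rfl⟩

theorem dExt_injective (hrev : ∀ i, Function.Bijective (δ i)) (i : X) :
    Function.Injective (dExt δ ρ i) := by
  intro u v h
  induction u generalizing i v with
  | nil => cases v with
    | nil => rfl
    | cons y v => simp [dExt] at h
  | cons x u ih => cases v with
    | nil => simp [dExt] at h
    | cons y v =>
      simp only [dExt, List.cons.injEq] at h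
      obtain rfl := (hrev i).1 h.1
      rw [ih _ h.2]

theorem dWord_injective (hrev : ∀ i, Function.Bijective (δ i)) (s : List X) :
    Function.Injective (dWord δ ρ s) := by
  induction s with
  | nil => exact fun _ _ h => h
  | cons i s ih => exact ih.comp (dExt_injective hrev i)

end Basic

/-! ### Orbits -/

section Orbits

variable {δ : X → Q → Q} {ρ : Q → X → X}

theorem InOrbit.refl (u : List Q) : InOrbit δ ρ u u := ⟨[], rfl⟩

theorem InOrbit.trans {u v w : List Q} (h : InOrbit δ ρ u v) (h' : InOrbit δ ρ v w) :
    InOrbit δ ρ u w := by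
  obtain ⟨s, rfl⟩ := h
  obtain ⟨t, rfl⟩ := h'
  exact ⟨s ++ t, dWord_append_left s t u⟩

theorem InOrbit.length_eq {u v : List Q} (h : InOrbit δ ρ u v) : u.length = v.length := by
  obtain ⟨s, rfl⟩ := h
  rw [dWord_length]

/-- On the finite set `Q^n` an injective map has only periodic points, so the forward orbits of
the semigroup generated by the `δ_i` are already orbits of a group. -/
theorem InOrbit.symm [Finite Q] (hrev : ∀ i, Function.Bijective (δ i)) {u v : List Q}
    (h : InOrbit δ ρ u v) : InOrbit δ ρ v u := by
  obtain ⟨s, rfl⟩ := h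
  have : Finite {l : List Q // l.length = u.length} := List.finite_length_eq Q u.length
  let f : {l : List Q // l.length = u.length} → {l : List Q // l.length = u.length} :=
    fun l => ⟨dWord δ ρ s l.1, by rw [dWord_length, l.2]⟩
  have hf : Function.Injective f := fun a b hab =>
    Subtype.ext (dWord_injective hrev s (congrArg Subtype.val hab))
  obtain ⟨n, hn, hp⟩ := hf.mem_periodicPts (⟨u, rfl⟩ : {l : List Q // l.length = u.length})
  have key : ∀ (k : ℕ) (l : {l : List Q // l.length = u.length}),
      InOrbit δ ρ l.1 (f^[k] l).1 := by
    intro k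
    induction k with
    | zero => exact fun l => InOrbit.refl _
    | succ k ih =>
      intro l
      rw [Function.iterate_succ_apply]
      exact InOrbit.trans ⟨s, rfl⟩ (ih (f l))
  obtain ⟨k, rfl⟩ := Nat.exists_eq_succ_of_ne_zero hn.ne'
  have h2 := key k (f ⟨u, rfl⟩)
  rw [← Function.iterate_succ_apply, hp.eq] at h2
  exact h2

theorem InOrbit.of_append_right {p q u v : List Q} (h : InOrbit δ ρ (p ++ u) (q ++ v))
    (hl : p.length = q.length) : InOrbit δ ρ u v := by
  obtain ⟨s, hs⟩ := h
  rw [dWord_append] at hs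
  exact ⟨_, (List.append_inj hs (by rw [dWord_length, hl])).2⟩

theorem InOrbit.of_append_left {p q u v : List Q} (h : InOrbit δ ρ (p ++ u) (q ++ v))
    (hl : p.length = q.length) : InOrbit δ ρ p q := by
  obtain ⟨s, hs⟩ := h
  rw [dWord_append] at hs
  exact ⟨_, (List.append_inj hs (by rw [dWord_length, hl])).1⟩

theorem InOrbit.exists_cons (hinv : ∀ q, Function.Bijective (ρ q)) {u v : List Q}
    (h : InOrbit δ ρ u v) (x : Q) : ∃ z, InOrbit δ ρ (x :: u) (z :: v) := by
  obtain ⟨s, rfl⟩ := h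
  obtain ⟨t, rfl⟩ := rExt_surjective (δ := δ) hinv x s
  exact ⟨_, t, dWord_cons _ _ _⟩

/-- An element moving `u` to `v` permutes the possible next letters. -/
theorem InOrbit.exists_transport (hrev : ∀ i, Function.Bijective (δ i)) {u v : List Q}
    (h : InOrbit δ ρ u v) :
    ∃ τ : Q → Q, Function.Injective τ ∧ ∀ z, InOrbit δ ρ (u ++ [z]) (v ++ [τ z]) := by
  obtain ⟨s, rfl⟩ := h
  have h1 : ∀ z, dWord δ ρ s (u ++ [z])
      = dWord δ ρ s u ++ [(rWord δ ρ u s).foldl (fun q i => δ i q) z] := by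
    intro z
    rw [dWord_append, dWord_cons, dWord_nil]
  refine ⟨fun z => (rWord δ ρ u s).foldl (fun q i => δ i q) z, ?_, fun z => ⟨s, h1 z⟩⟩
  intro a b hab
  have h2 : dWord δ ρ s (u ++ [a]) = dWord δ ρ s (u ++ [b]) := by
    rw [h1, h1]
    simpa using hab
  simpa using dWord_injective hrev s h2

theorem levelTransitive_mono {m n : ℕ} [Nonempty Q] (hmn : m ≤ n)
    (h : LevelTransitive δ ρ n) : LevelTransitive δ ρ m := by
  intro u v hu hv
  obtain ⟨q⟩ := ‹Nonempty Q›
  have := h (u ++ List.replicate (n - m) q) (v ++ List.replicate (n - m) q)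
    (by simp; omega) (by simp; omega)
  exact this.of_append_left (by omega)

/-- A set of words of length `c + 1` closed under orbits has orbit-closed orbital words. -/
theorem orbital_of_inOrbit [Finite Q] (hrev : ∀ i, Function.Bijective (δ i))
    {c : ℕ} {O2 : Set (List Q)}
    (hO : ∀ f g, f.length = c + 1 → f ∈ O2 → InOrbit δ ρ f g → g ∈ O2) {u v : List Q}
    (hu : Orbital c O2 u) (h : InOrbit δ ρ u v) : Orbital c O2 v := by
  intro f hf hfv
  obtain ⟨p, q, rfl⟩ := hfv
  obtain ⟨s, hs⟩ := h.symm hrev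
  rw [dWord_append, dWord_append] at hs
  have h1 : dWord δ ρ (rWord δ ρ p s) f ∈ O2 :=
    hu _ (by rw [dWord_length, hf]) ⟨_, _, hs⟩
  exact hO _ _ (by rw [dWord_length, hf]) h1 (InOrbit.symm hrev ⟨_, rfl⟩)

end Orbits

/-! ### Finiteness -/

section Finiteness

variable {δ : X → Q → Q} {ρ : Q → X → X}

/-- If the length-`n` prefix of an element of the orbit of `v` determines that element, for all
`v ∈ V`, then the orbit of `v` is a Mealy automaton on the finite stateset of words of length at
most `n`. There are finitely many of these, so the `ρ_v` take finitely many values. -/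
theorem finite_rWord_of_prefix_determines [Finite Q] [Finite X] (n : ℕ) (V : Set (List Q))
    (hV : ∀ v ∈ V, ∀ s s', (dWord δ ρ s v).take n = (dWord δ ρ s' v).take n →
      dWord δ ρ s v = dWord δ ρ s' v) :
    (rWord δ ρ '' V).Finite := by
  have : Finite {l : List Q // l.length ≤ n} := List.finite_length_le Q n
  -- `T v` is the graph of the output function of the automaton carried by the orbit of `v`
  let T : List Q → Set ({l : List Q // l.length ≤ n} × X × X) := fun v =>
    {a | ∃ s, (dWord δ ρ s v).take n = a.1.1 ∧
      (dWord δ ρ s v).foldl (fun j x => ρ x j) a.2.1 = a.2.2}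
  let D : List Q → {l : List Q // l.length ≤ n} × Set ({l : List Q // l.length ≤ n} × X × X) :=
    fun v => (⟨v.take n, by simp⟩, T v)
  have key : ∀ v ∈ V, ∀ v' ∈ V, D v = D v' → rWord δ ρ v = rWord δ ρ v' := by
    intro v hv v' hv' hD
    have h1 : v.take n = v'.take n := congrArg (fun d => d.1.1) hD
    have h2 : T v = T v' := congrArg Prod.snd hD
    have main : ∀ (t : List X) (s : List X),
        rWord δ ρ (dWord δ ρ s v) t = rWord δ ρ (dWord δ ρ s v') t := by
      intro t
      induction t with
      | nil => intro s; rw [rWord_nil, rWord_nil]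
      | cons i t ih =>
        intro s
        rw [rWord_cons, rWord_cons]
        have h3 := ih (s ++ [i])
        rw [dWord_append_left, dWord_append_left] at h3
        have h4 : ((⟨(dWord δ ρ s v).take n, by simp⟩, i,
            (dWord δ ρ s v).foldl (fun j x => ρ x j) i) :
              {l : List Q // l.length ≤ n} × X × X) ∈ T v' := h2 ▸ ⟨s, rfl, rfl⟩
        obtain ⟨s', hs', ho⟩ := h4
        have h5 : dWord δ ρ s' v' = dWord δ ρ s v' := by
          apply hV v' hv'
          rw [hs']
          change (dWord δ ρ s v).take n = _
          rw [dWord_take, dWord_take, h1]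
        rw [h5] at ho
        rw [List.cons.injEq]
        exact ⟨ho.symm, h3⟩
    funext t
    exact main t []
  have hDV : (D '' V).Finite := Set.toFinite _
  refine (hDV.image (fun d => rWord δ ρ (Function.invFunOn D V d))).subset ?_
  rintro _ ⟨v, hv, rfl⟩
  refine ⟨D v, ⟨v, hv, rfl⟩, ?_⟩
  have hex : ∃ a ∈ V, D a = D v := ⟨v, hv, rfl⟩
  exact key _ (Function.invFunOn_mem hex) v hv (Function.invFunOn_eq hex)

/-- If letters following an orbital word of length at least `n` are fixed by the stabilizer of that
word, then the orbital words produce finitely many transformations. -/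
theorem finite_rWord_of_dead [Finite Q] [Finite X] (hrev : ∀ i, Function.Bijective (δ i))
    {c : ℕ} {O2 : Set (List Q)}
    (hO : ∀ f g, f.length = c + 1 → f ∈ O2 → InOrbit δ ρ f g → g ∈ O2) (n : ℕ)
    (hdead : ∀ p a b, n ≤ p.length → Orbital c O2 (p ++ [a]) →
      InOrbit δ ρ (p ++ [a]) (p ++ [b]) → a = b) :
    (rWord δ ρ '' {v | Orbital c O2 v}).Finite := by
  refine finite_rWord_of_prefix_determines n _ ?_
  intro v
  induction v using List.reverseRecOn with
  | nil => intro _ s s' _; rw [dWord_nil, dWord_nil]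
  | append_singleton v y ih =>
    intro hv s s' h
    by_cases hn : n ≤ v.length
    · have hv0 : Orbital c O2 v := fun f hf hfv => hv f hf (hfv.trans (List.infix_append' [] v [y]))
      have h0 : dWord δ ρ s v = dWord δ ρ s' v := by
        apply ih hv0
        rw [dWord_take, dWord_take, List.take_append_of_le_length hn] at h
        rwa [dWord_take, dWord_take]
      have e1 : ∀ s, ∃ a, dWord δ ρ s (v ++ [y]) = dWord δ ρ s v ++ [a] := fun s => by
        rw [dWord_append, dWord_cons, dWord_nil]
        exact ⟨_, rfl⟩
      obtain ⟨a, ha⟩ := e1 s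
      obtain ⟨b, hb⟩ := e1 s'
      have hab : InOrbit δ ρ (dWord δ ρ s v ++ [a]) (dWord δ ρ s v ++ [b]) := by
        rw [← ha, h0, ← hb]
        exact (InOrbit.symm hrev ⟨s, rfl⟩).trans ⟨s', rfl⟩
      have := hdead _ a b (by rwa [dWord_length])
        (by rw [← ha]; exact orbital_of_inOrbit hrev hO hv ⟨s, rfl⟩) hab
      rw [ha, hb, h0, this]
    · rwa [List.take_of_length_le, List.take_of_length_le] at h <;>
        (simp [dWord_length]; omega)

/-- The group is finite as soon as the words over `Q` produce finitely many transformations. -/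
theorem finite_autGroup (h : (Set.range (rWord δ ρ)).Finite) : Finite (autGroup δ ρ) := by
  set P : Set (Equiv.Perm (List X)) := {π | ∃ q : Q, ⇑π = rExt δ ρ q} with hP
  have hM : ∀ π ∈ Submonoid.closure P, ⇑π ∈ Set.range (rWord δ ρ) := by
    intro π hπ
    induction hπ using Submonoid.closure_induction with
    | mem π hπ =>
      obtain ⟨q, hq⟩ := hπ
      exact ⟨[q], by rw [hq]; rfl⟩
    | one => exact ⟨[], rfl⟩
    | mul a b _ _ ha hb =>
      obtain ⟨u, hu⟩ := ha
      obtain ⟨v, hv⟩ := hb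
      refine ⟨v ++ u, ?_⟩
      funext s
      rw [rWord_append, hu, hv]
      rfl
  have hfin : ((Submonoid.closure P : Submonoid (Equiv.Perm (List X))) :
      Set (Equiv.Perm (List X))).Finite :=
    Set.Finite.of_finite_image (f := fun π : Equiv.Perm (List X) => (⇑π : List X → List X))
      (h.subset (by rintro _ ⟨π, hπ, rfl⟩; exact hM π hπ))
      (fun a _ b _ hab => DFunLike.coe_injective hab)
  have hord : ∀ π ∈ P, IsOfFinOrder π := by
    intro π hπ
    rw [← finite_powers]
    exact hfin.subset (Submonoid.powers_le.2 (Submonoid.subset_closure hπ))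
  have h2 := Subgroup.closure_toSubmonoid_of_isOfFinOrder hord
  have h3 : ((Subgroup.closure P : Subgroup _) : Set (Equiv.Perm (List X))).Finite := by
    rw [← Subgroup.coe_toSubmonoid, h2]
    exact hfin
  exact h3.to_subtype

end Finiteness

/-! ### From orbital words to all words -/

section Saturation

variable {δ : X → Q → Q} {ρ : Q → X → X}

/-- Nonempty words `s y` whose last letter `y` is not `F s`. When `F` is singular at level `c`
(see `IsSingular`), those of length `c + 1` are the ones with last label 2. -/
def live (F : List Q → Q) : Set (List Q) := {f | ∃ s y, f = s ++ [y] ∧ y ≠ F s}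

theorem concat_mem_live {F : List Q → Q} {s : List Q} {y : Q} :
    s ++ [y] ∈ live F ↔ y ≠ F s := by
  constructor
  · rintro ⟨s', y', h, hy⟩
    obtain ⟨rfl, h2⟩ := List.append_inj' h rfl
    obtain rfl : y = y' := by simpa using h2
    exact hy
  · exact fun h => ⟨s, y, rfl, h⟩

theorem orbital_concat {F : List Q → Q} {c : ℕ} {w : List Q} {y : Q}
    (hw : Orbital c (live F) w) (hy : c ≤ w.length → y ≠ F (w.drop (w.length - c))) :
    Orbital c (live F) (w ++ [y]) := by
  intro f hf hfw
  rcases List.infix_concat_iff.1 hfw with h | h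
  · obtain ⟨p, hp⟩ := h
    rcases List.eq_nil_or_concat f with rfl | ⟨s, z, rfl⟩
    · simp at hf
    · rw [List.concat_eq_append, ← List.append_assoc] at hp
      obtain ⟨rfl, h2⟩ := List.append_inj' hp rfl
      obtain rfl : z = y := by simpa using h2
      have hs : s.length = c := by simpa using hf
      have h3 := hy (by simp [hs])
      rw [List.concat_eq_append, concat_mem_live]
      simpa [hs] using h3
  · exact hw f hf h

theorem drop_concat {w : List Q} {c : ℕ} (y : Q) (hc : 0 < c) (hw : c ≤ w.length) :
    (w ++ [y]).drop ((w ++ [y]).length - c) = (w.drop (w.length - c)).tail ++ [y] := by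
  rw [List.tail_drop, ← List.drop_append_of_le_length (by omega)]
  congr 1
  simp
  omega

/-- Write `ρ_w` together with the last `c` letters `s` of `w` as a vertex `(ρ_w, s)`, and let `M k`
append the letter at cyclic distance `k` from the singular letter `F s`. Since `x ↦ F (x g)` is a
permutation of the three states, all `M k` are injective, and `M 0 = M 1 ∘ (M 2)⁻¹ ∘ M 1`. The
finite set of vertices coming from orbital words is stable under `M 1` and `M 2`, hence also under
`M 0`, so it contains all vertices. -/
theorem finite_range_rWord [Finite Q] (hcard : Nat.card Q = 3)
    (hinv : ∀ q, Function.Bijective (ρ q)) {c : ℕ} (hc : 0 < c) (F : List Q → Q)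
    (hF : ∀ g : List Q, g.length + 1 = c → Function.Bijective fun x => F (x :: g))
    (hfin : (rWord δ ρ '' {v | Orbital c (live F) v}).Finite) :
    (Set.range (rWord δ ρ)).Finite := by
  let e : Q ≃ Fin 3 := Finite.equivFinOfCardEq hcard
  let σ : Fin 3 → Q → Q := fun k y => e.symm (e y + k)
  have hσσ : ∀ k l y, σ k (σ l y) = σ (l + k) y := fun k l y => by simp [σ, add_assoc]
  have hσ0 : ∀ y, σ 0 y = y := fun y => by simp [σ]
  have hσi : ∀ k, Function.Injective (σ k) := fun k a b h => by simpa [σ] using h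
  have hσne : ∀ k y, k ≠ 0 → σ k y ≠ y := fun k y hk h => hk (by
    have := congrArg e h
    simpa [σ] using this)
  let M : Fin 3 → (List X → List X) × List Q → (List X → List X) × List Q :=
    fun k a => (rExt δ ρ (σ k (F a.2)) ∘ a.1, a.2.tail ++ [σ k (F a.2)])
  let vert : List Q → (List X → List X) × List Q := fun w => (rWord δ ρ w, w.drop (w.length - c))
  let H : Set ((List X → List X) × List Q) := vert '' {w | Orbital c (live F) w ∧ c ≤ w.length}
  have hHlen : ∀ a ∈ H, a.2.length = c := by
    rintro _ ⟨w, ⟨_, hw⟩, rfl⟩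
    simp [vert]
    omega
  have hHfin : H.Finite := by
    have h1 : {l : List Q | l.length = c}.Finite := List.finite_length_eq Q c
    refine (hfin.prod h1).subset ?_
    rintro a ha
    refine ⟨?_, hHlen a ha⟩
    obtain ⟨w, ⟨hw, _⟩, rfl⟩ := ha
    exact ⟨w, hw, rfl⟩
  have hMinj : ∀ k a b, a.2.length = c → b.2.length = c → M k a = M k b → a = b := by
    rintro k ⟨f, s⟩ ⟨f', s'⟩ hs hs' h
    simp only at hs hs'
    obtain ⟨x, g, rfl⟩ := List.exists_cons_of_length_pos (by omega : 0 < s.length)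
    obtain ⟨x', g', rfl⟩ := List.exists_cons_of_length_pos (by omega : 0 < s'.length)
    simp only [M, Prod.mk.injEq, List.tail_cons] at h
    obtain ⟨h1, h2⟩ := h
    obtain ⟨rfl, h3⟩ := List.append_inj' h2 rfl
    have h4 : F (x :: g) = F (x' :: g) := hσi k (by simpa using h3)
    obtain rfl : x = x' := (hF g (by simpa using hs)).1 h4
    have h5 : f = f' := (rExt_injective hinv _).comp_left h1
    rw [h5]
  have hvert : ∀ w y, c ≤ w.length → vert (w ++ [y])
      = (rExt δ ρ y ∘ (vert w).1, (vert w).2.tail ++ [y]) := by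
    intro w y hw
    simp only [vert]
    rw [drop_concat y hc hw]
    congr 1
    funext s
    rw [rWord_append]
    rfl
  have hHM : ∀ k, k ≠ 0 → Set.MapsTo (M k) H H := by
    rintro k hk _ ⟨w, ⟨hw, hcw⟩, rfl⟩
    refine ⟨w ++ [σ k (F (vert w).2)], ⟨?_, by simp; omega⟩, hvert w _ hcw⟩
    exact orbital_concat hw fun _ => hσne k _ hk
  have hHsurj : Set.SurjOn (M 2) H H := by
    have hinj : Set.InjOn (M 2) H := fun a ha b hb h => hMinj 2 a b (hHlen a ha) (hHlen b hb) h
    exact ((hHfin.injOn_iff_bijOn_of_mapsTo (hHM 2 (by decide))).1 hinj).surjOn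
  have hHM0 : Set.MapsTo (M 0) H H := by
    rintro ⟨f, s⟩ ha
    have hs : s.length = c := hHlen _ ha
    obtain ⟨x, g, rfl⟩ := List.exists_cons_of_length_pos (by omega : 0 < s.length)
    have hg : g.length + 1 = c := by simpa using hs
    obtain ⟨x', hx'⟩ := (hF g hg).2 (σ 2 (F (x :: g)))
    beta_reduce at hx'
    have h1 : M 1 (f, x :: g) = M 2 (f, x' :: g) := by
      simp only [M, hx', hσσ, List.tail_cons]
      rfl
    -- as `M 2` is onto `H` and injective, this puts `(f, x' g)` in `H`
    obtain ⟨b, hb, hb2⟩ := hHsurj (hHM 1 (by decide) ha)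
    have h2 : b = (f, x' :: g) := hMinj 2 _ _ (hHlen b hb) (by simpa using hs) (hb2.trans h1)
    have h3 : M 1 (f, x' :: g) = M 0 (f, x :: g) := by
      simp only [M, hx', hσσ, List.tail_cons]
      rfl
    rw [← h3]
    exact hHM 1 (by decide) (h2 ▸ hb)
  have hall : ∀ w : List Q, c ≤ w.length → vert w ∈ H := by
    intro w
    induction w using List.reverseRecOn with
    | nil =>
      intro h
      simp at h
      omega
    | append_singleton w y ih =>
      intro h
      by_cases hw : c ≤ w.length
      · rw [hvert w y hw]
        have h1 : y = σ (e y - e (F (vert w).2)) (F (vert w).2) := by simp [σ]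
        have h2 : ∀ k, M k (vert w) ∈ H := fun k => by
          by_cases hk : k = 0
          · rw [hk]
            exact hHM0 (ih hw)
          · exact hHM k hk (ih hw)
        have h3 := h2 (e y - e (F (vert w).2))
        simp only [M, ← h1] at h3
        exact h3
      · refine ⟨w ++ [y], ⟨?_, h⟩, rfl⟩
        intro f hf hfw
        have := hfw.length_le
        simp at this
        omega
  refine ((hHfin.image Prod.fst).union
    ((List.finite_length_le Q c).image (rWord δ ρ))).subset ?_
  rintro _ ⟨w, rfl⟩
  by_cases hw : c ≤ w.length
  · exact Or.inl ⟨_, hall w hw, rfl⟩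
  · exact Or.inr ⟨w, by simp; omega, rfl⟩

end Saturation

/-! ### Labels and the first non-transitive level -/

section Labels

variable {δ : X → Q → Q} {ρ : Q → X → X}

theorem eq_or_eq_or_eq_of_card_three [Finite Q] (hcard : Nat.card Q = 3) {a b c : Q}
    (hab : a ≠ b) (hac : a ≠ c) (hbc : b ≠ c) (d : Q) : d = a ∨ d = b ∨ d = c := by
  let e : Q ≃ Fin 3 := Finite.equivFinOfCardEq hcard
  have h : ∀ a b c d : Fin 3, a ≠ b → a ≠ c → b ≠ c → d = a ∨ d = b ∨ d = c := by decide
  simpa using h (e a) (e b) (e c) (e d) (by simpa) (by simpa) (by simpa)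

theorem label_eq_three (hcard : Nat.card Q = 3) {n : ℕ} (h : LevelTransitive δ ρ (n + 1))
    {u : List Q} (hu : u.length = n) (x : Q) : label δ ρ u x = 3 := by
  have : {z : Q | InOrbit δ ρ (u ++ [x]) (u ++ [z])} = Set.univ :=
    Set.eq_univ_of_forall fun z => h _ _ (by simp [hu]) (by simp [hu])
  rw [label, this, Set.ncard_univ, hcard]

/-- `F` picks, after each word `u` of length `c`, a letter fixed by the stabilizer of `u`, while
the other two letters are exchanged by it. -/
def IsSingular (δ : X → Q → Q) (ρ : Q → X → X) (c : ℕ) (F : List Q → Q) : Prop :=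
  ∀ u : List Q, u.length = c →
    (∀ z, InOrbit δ ρ (u ++ [F u]) (u ++ [z]) → z = F u) ∧
    ∀ a b, a ≠ F u → b ≠ F u → InOrbit δ ρ (u ++ [a]) (u ++ [b])

/-- If some word of length `c` has two, but not three, equivalent next letters, then so does every
word of length `c`, by transitivity on that level. -/
theorem exists_isSingular [Finite Q] (hcard : Nat.card Q = 3)
    (hrev : ∀ i, Function.Bijective (δ i)) {c : ℕ} (htr : LevelTransitive δ ρ c)
    {u₀ : List Q} (hu₀ : u₀.length = c) (hnt : ¬ ∀ a b, InOrbit δ ρ (u₀ ++ [a]) (u₀ ++ [b]))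
    {a₀ b₀ : Q} (hne : a₀ ≠ b₀) (hab : InOrbit δ ρ (u₀ ++ [a₀]) (u₀ ++ [b₀])) :
    ∃ F, IsSingular δ ρ c F := by
  have hba := hab.symm hrev
  have : ∃ f, ¬ InOrbit δ ρ (u₀ ++ [a₀]) (u₀ ++ [f]) := by
    by_contra! h
    exact hnt fun a b => ((h a).symm hrev).trans (h b)
  obtain ⟨f, hf⟩ := this
  have hfa : a₀ ≠ f := by
    rintro rfl
    exact hf (InOrbit.refl _)
  have hfb : b₀ ≠ f := by
    rintro rfl
    exact hf hab
  have hthree := eq_or_eq_or_eq_of_card_three hcard hne hfa hfb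
  have hfix : ∀ z, InOrbit δ ρ (u₀ ++ [f]) (u₀ ++ [z]) → z = f := by
    intro z hz
    have hz' := hz.symm hrev
    rcases hthree z with rfl | rfl | rfl
    · exact absurd hz' hf
    · exact absurd (hab.trans hz') hf
    · rfl
  have hmove : ∀ a b, a ≠ f → b ≠ f → InOrbit δ ρ (u₀ ++ [a]) (u₀ ++ [b]) := by
    intro a b ha hb
    rcases hthree a with rfl | rfl | rfl <;> rcases hthree b with rfl | rfl | rfl <;>
      first
      | exact InOrbit.refl _
      | assumption
      | exact absurd rfl ha
      | exact absurd rfl hb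
  have hex : ∀ u : List Q, ∃ y, u.length = c →
      (∀ z, InOrbit δ ρ (u ++ [y]) (u ++ [z]) → z = y) ∧
      ∀ a b, a ≠ y → b ≠ y → InOrbit δ ρ (u ++ [a]) (u ++ [b]) := by
    intro u
    by_cases hu : u.length = c
    · obtain ⟨τ, hτ, hτo⟩ := (htr u u₀ hu hu₀).exists_transport hrev
      obtain ⟨y, rfl⟩ := Finite.surjective_of_injective hτ f
      refine ⟨y, fun _ => ⟨fun z hz => hτ (hfix _ ?_), fun a b ha hb => ?_⟩⟩
      · exact (((hτo y).symm hrev).trans hz).trans (hτo z)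
      · exact ((hτo a).trans (hmove _ _ (hτ.ne ha) (hτ.ne hb))).trans ((hτo b).symm hrev)
    · exact ⟨f, fun h => absurd h hu⟩
  choose F hF using hex
  exact ⟨F, hF⟩

/-- The words `u (F u)` with `u` of length `c` form a union of orbits. -/
theorem IsSingular.eq_of_inOrbit [Finite Q] (hcard : Nat.card Q = 3)
    (hrev : ∀ i, Function.Bijective (δ i)) {c : ℕ} {F : List Q → Q}
    (hF : IsSingular δ ρ c F) {u v : List Q} {a : Q} (hu : u.length = c)
    (h : InOrbit δ ρ (u ++ [a]) (v ++ [F v])) : a = F u := by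
  by_contra ha
  have huv : u.length = v.length := by simpa using h.length_eq
  -- `a` has an equivalent letter `b ≠ a`; a move to `v` would take both to `F v`
  have : ∃ b, b ≠ F u ∧ b ≠ a := by
    by_contra! hb
    have h2 : (Set.univ : Set Q) ⊆ {F u, a} := fun b _ => by
      by_cases h3 : b = F u
      · exact Or.inl h3
      · exact Or.inr (hb b h3)
    have h3 := (Set.ncard_le_ncard h2 (Set.toFinite _)).trans (Set.ncard_insert_le _ _)
    rw [Set.ncard_univ, hcard, Set.ncard_singleton] at h3
    omega
  obtain ⟨b, hb, hba⟩ := this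
  obtain ⟨τ, hτ, hτo⟩ := (h.of_append_left huv).exists_transport hrev
  have hfix : ∀ y, y ≠ F u → τ y = F v := fun y hy =>
    (hF v (huv ▸ hu)).1 _
      (((h.symm hrev).trans ((hF u hu).2 a y ha hy)).trans (hτo y))
  exact hba (hτ ((hfix b hb).trans (hfix a ha).symm))

/-- Removing the first letter maps the orbit of the words `u (F u)` onto the transitive level `c`,
so every `g b` with `b ∈ Q` comes from some `z g` with `F (z g) = b`. -/
theorem IsSingular.bijective [Finite Q] (hcard : Nat.card Q = 3)
    (hinv : ∀ q, Function.Bijective (ρ q)) (hrev : ∀ i, Function.Bijective (δ i)) {c : ℕ}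
    (htr : LevelTransitive δ ρ c) {F : List Q → Q} (hF : IsSingular δ ρ c F)
    (g : List Q) (hg : g.length + 1 = c) : Function.Bijective fun x => F (x :: g) := by
  have hsurj : Function.Surjective fun x => F (x :: g) := by
    intro b
    obtain ⟨z, hz⟩ := (htr (g ++ [F (b :: g)]) (g ++ [b]) (by simpa) (by simpa)).exists_cons hinv b
    refine ⟨z, ?_⟩
    have h2 : InOrbit δ ρ ((z :: g) ++ [b]) ((b :: g) ++ [F (b :: g)]) := hz.symm hrev
    exact (hF.eq_of_inOrbit hcard hrev (by simpa using hg) h2).symm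
  exact ⟨Finite.injective_iff_surjective.2 hsurj, hsurj⟩

/-- Orbital words of length `n` form a single orbit when all shorter labels of orbital words from
level `c` on are at least 2. -/
theorem orbital_inOrbit [Finite Q] (hcard : Nat.card Q = 3)
    (hrev : ∀ i, Function.Bijective (δ i)) {c : ℕ} (htr : ∀ m ≤ c, LevelTransitive δ ρ m)
    {F : List Q → Q} {n : ℕ}
    (hO : ∀ f g, f.length = c + 1 → f ∈ live F → InOrbit δ ρ f g → g ∈ live F)
    (hmin : ∀ u y, c ≤ u.length → u.length < n → Orbital c (live F) (u ++ [y]) →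
      ∃ z, z ≠ y ∧ InOrbit δ ρ (u ++ [y]) (u ++ [z])) :
    ∀ m ≤ n, ∀ u v : List Q, u.length = m → v.length = m → Orbital c (live F) u →
      Orbital c (live F) v → InOrbit δ ρ u v := by
  intro m
  induction m with
  | zero =>
    intro _ u v hu hv _ _
    exact htr 0 (Nat.zero_le c) u v hu hv
  | succ m ih =>
    intro hm u v hu hv hou hov
    by_cases hmc : m + 1 ≤ c
    · exact htr _ hmc u v hu hv
    obtain ⟨u, y, rfl⟩ := List.eq_nil_or_concat u |>.resolve_left (by rintro rfl; simp at hu)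
    obtain ⟨v, z, rfl⟩ := List.eq_nil_or_concat v |>.resolve_left (by rintro rfl; simp at hv)
    simp only [List.concat_eq_append, List.length_append, List.length_singleton,
      Nat.add_right_cancel_iff] at *
    have hpre : ∀ (w : List Q) (x : Q), Orbital c (live F) (w ++ [x]) → Orbital c (live F) w :=
      fun w x h f hf hfw => h f hf (hfw.trans (List.infix_append' [] w [x]))
    obtain ⟨τ, hτ, hτo⟩ :=
      (ih (by omega) u v hu hv (hpre _ _ hou) (hpre _ _ hov)).exists_transport hrev
    refine (hτo y).trans ?_
    have h1 : Orbital c (live F) (v ++ [τ y]) := orbital_of_inOrbit hrev hO hou (hτo y)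
    obtain ⟨x, hx, hxo⟩ := hmin v (τ y) (by omega) (by omega) h1
    have h2 := orbital_of_inOrbit hrev hO h1 hxo
    -- the singular letter cannot follow `v`, so only `τ y` and `x` are left for `z`
    have hne : ∀ a, Orbital c (live F) (v ++ [a]) → a ≠ F (v.drop (v.length - c)) := by
      intro a ha
      rw [← concat_mem_live]
      refine ha _ (by simp; omega) (List.IsSuffix.isInfix ?_)
      exact ⟨v.take (v.length - c), by rw [← List.append_assoc, List.take_append_drop]⟩
    rcases eq_or_eq_or_eq_of_card_three hcard hx (hne _ h2) (hne _ h1) z with rfl | rfl | h3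
    · exact hxo
    · exact InOrbit.refl _
    · exact absurd h3 (hne _ hov)

end Labels

/-! ### The branch -/

/-- If a connected 3-state invertible-reversible Mealy automaton
generates an infinite group, the orbit tree of its dual admits a branch labeled
either `3^ω` or `3^n 2^ω` for some `n`. -/
theorem infinite_group_branch
    {Q X : Type*} [Finite Q] [Finite X] [Nonempty X]
    (δ : X → Q → Q) (ρ : Q → X → X)
    (hcard : Nat.card Q = 3)
    (hinv : ∀ q : Q, Function.Bijective (ρ q))
    (hrev : ∀ i : X, Function.Bijective (δ i))
    (hconn : LevelTransitive δ ρ 1)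
    (hinf : Infinite ↥(autGroup δ ρ)) :
    ∃ w : ℕ → Q,
      (∀ i : ℕ, label δ ρ (pref w i) (w i) = 3) ∨
      ∃ n : ℕ, (∀ i < n, label δ ρ (pref w i) (w i) = 3) ∧
        (∀ i, n ≤ i → label δ ρ (pref w i) (w i) = 2) := by
  have hQ : Nonempty Q := by
    by_contra h
    rw [not_nonempty_iff] at h
    simp at hcard
  obtain ⟨q₀⟩ := hQ
  by_cases hall : ∀ n, LevelTransitive δ ρ n
  · exact ⟨fun _ => q₀, Or.inl fun i => label_eq_three hcard (hall (i + 1)) (by simp [pref]) _⟩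
  push Not at hall
  classical
  -- `c + 1` is the first level that is not transitive
  obtain ⟨c, hc, hnot, htr⟩ : ∃ c, 0 < c ∧ ¬ LevelTransitive δ ρ (c + 1) ∧
      ∀ m ≤ c, LevelTransitive δ ρ m := by
    have hspec := Nat.find_spec hall
    have hmin : ∀ m < Nat.find hall, LevelTransitive δ ρ m := fun m hm => by
      simpa using Nat.find_min hall hm
    have h0 : Nat.find hall ≠ 0 := by
      intro h
      rw [h] at hspec
      refine hspec fun u v hu hv => ?_
      rw [List.length_eq_zero_iff.1 hu, List.length_eq_zero_iff.1 hv]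
      exact InOrbit.refl _
    have h1 : Nat.find hall ≠ 1 := by
      intro h
      rw [h] at hspec
      exact hspec hconn
    refine ⟨Nat.find hall - 1, by omega, ?_, fun m hm => hmin m (by omega)⟩
    rwa [Nat.sub_add_cancel (by omega)]
  have hntot : ∀ u : List Q, u.length = c → ¬ ∀ a b, InOrbit δ ρ (u ++ [a]) (u ++ [b]) := by
    intro u hu h
    refine hnot ?_
    have key : ∀ p : List Q, p.length = c + 1 → InOrbit δ ρ p (u ++ [q₀]) := by
      intro p hp
      obtain ⟨p, a, rfl⟩ := List.eq_nil_or_concat p |>.resolve_left (by rintro rfl; simp at hp)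
      rw [List.concat_eq_append] at hp ⊢
      obtain ⟨τ, _, hτo⟩ := (htr c le_rfl p u (by simpa using hp) hu).exists_transport hrev
      exact (hτo a).trans (h _ _)
    exact fun p q hp hq => (key p hp).trans ((key q hq).symm hrev)
  by_cases htriv : ∀ (u : List Q) a b, u.length = c → InOrbit δ ρ (u ++ [a]) (u ++ [b]) → a = b
  -- all labels are 1 from level `c` on, so all orbits are bounded
  · exfalso
    have hfin := finite_rWord_of_dead (δ := δ) (ρ := ρ) (c := c) (O2 := Set.univ) hrev
      (fun _ _ _ _ _ => trivial) c (fun p a b hp _ hab => by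
        rw [← List.take_append_drop (p.length - c) p, List.append_assoc, List.append_assoc] at hab
        exact htriv _ a b (by simp; omega) (hab.of_append_right rfl))
    have : {v : List Q | Orbital c Set.univ v} = Set.univ :=
      Set.eq_univ_of_forall fun v f _ _ => trivial
    rw [this, Set.image_univ] at hfin
    have := finite_autGroup hfin
    exact not_finite (autGroup δ ρ)
  push Not at htriv
  obtain ⟨u₀, a₀, b₀, hu₀, hab, hne⟩ := htriv
  obtain ⟨F, hF⟩ := exists_isSingular hcard hrev (htr c le_rfl) hu₀ (hntot u₀ hu₀) hne hab
  have hO : ∀ f g, f.length = c + 1 → f ∈ live F → InOrbit δ ρ f g → g ∈ live F := by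
    rintro _ g hf ⟨u, a, rfl, ha⟩ h
    have hg := h.length_eq
    obtain ⟨v, b, rfl⟩ := List.eq_nil_or_concat g |>.resolve_left (by rintro rfl; simp at hg)
    rw [List.concat_eq_append] at h ⊢
    refine concat_mem_live.2 ?_
    rintro rfl
    exact ha (hF.eq_of_inOrbit hcard hrev (by simpa using hf) h)
  have hsing : ∀ (v : List Q) a, c ≤ v.length → Orbital c (live F) (v ++ [a]) →
      a ≠ F (v.drop (v.length - c)) := by
    intro v a hv ha
    rw [← concat_mem_live]
    refine ha _ (by simp; omega) (List.IsSuffix.isInfix ?_)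
    exact ⟨v.take (v.length - c), by rw [← List.append_assoc, List.take_append_drop]⟩
  by_cases hdead : ∃ n, ∃ u y, u.length = n ∧ c ≤ n ∧ Orbital c (live F) (u ++ [y]) ∧
      ∀ z, InOrbit δ ρ (u ++ [y]) (u ++ [z]) → z = y
  -- past the first length at which an orbital word gets label 1, all orbital words get label 1
  · exfalso
    obtain ⟨u, y, hu, hcn, hou, huy⟩ := Nat.find_spec hdead
    set n := Nat.find hdead with hn
    have hmin : ∀ u y, c ≤ u.length → u.length < n → Orbital c (live F) (u ++ [y]) →
        ∃ z, z ≠ y ∧ InOrbit δ ρ (u ++ [y]) (u ++ [z]) := by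
      intro u y h1 h2 h3
      by_contra! h4
      refine Nat.find_min hdead h2 ⟨u, y, rfl, h1, h3, fun z hz => ?_⟩
      by_contra h5
      exact h4 z h5 hz
    have hpre : ∀ (w : List Q) (x : Q), Orbital c (live F) (w ++ [x]) → Orbital c (live F) w :=
      fun w x h f hf hfw => h f hf (hfw.trans (List.infix_append' [] w [x]))
    have hfin := finite_rWord_of_dead hrev hO n (fun p a b hp hpa hab => by
      have hpe : p = p.take (p.length - n) ++ p.drop (p.length - n) :=
        (List.take_append_drop _ p).symm
      set r := p.take (p.length - n)
      set p' := p.drop (p.length - n) with hp'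
      have hl : p'.length = n := by
        rw [hp', List.length_drop]
        omega
      rw [hpe, List.append_assoc] at hpa
      rw [hpe, List.append_assoc, List.append_assoc] at hab
      have hab' := hab.of_append_right rfl
      have hpa' : Orbital c (live F) (p' ++ [a]) := fun f hf hfp =>
        hpa f hf (hfp.trans (List.suffix_append _ _).isInfix)
      obtain ⟨τ, hτ, hτo⟩ := (orbital_inOrbit hcard hrev htr hO hmin n le_rfl p' u hl hu
        (hpre _ _ hpa') (hpre _ _ hou)).exists_transport hrev
      have huab : InOrbit δ ρ (u ++ [τ a]) (u ++ [τ b]) :=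
        (((hτo a).symm hrev).trans hab').trans (hτo b)
      have hoa := orbital_of_inOrbit hrev hO hpa' (hτo a)
      have hob := orbital_of_inOrbit hrev hO hoa huab
      apply hτ
      by_contra hτne
      have hsa := hsing u _ (by omega) hoa
      have hsb := hsing u _ (by omega) hob
      have hsy := hsing u _ (by omega) hou
      rcases eq_or_eq_or_eq_of_card_three hcard hτne hsa hsb y with h | h | h
      · exact hτne (h ▸ (huy _ (h ▸ huab)).symm)
      · exact hτne (h ▸ huy _ (h ▸ huab.symm hrev))
      · exact hsy h)
    have := finite_autGroup (finite_range_rWord hcard hinv hc F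
      (fun g hg => hF.bijective hcard hinv hrev (htr c le_rfl) g hg) hfin)
    exact not_finite (autGroup δ ρ)
  · push Not at hdead
    -- an infinite orbital word, obtained by never choosing the singular letter
    have hch : ∀ u : List Q, ∃ y, y ≠ F (u.drop (u.length - c)) := by
      intro u
      have : Nontrivial Q := ⟨a₀, b₀, hne⟩
      exact exists_ne _
    choose ch hch using hch
    let g : ℕ → List Q := fun k => Nat.rec [] (fun _ u => u ++ [ch u]) k
    have hg1 : ∀ k, g (k + 1) = g k ++ [ch (g k)] := fun _ => rfl
    have hpref : ∀ k, pref (fun k => ch (g k)) k = g k := by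
      intro k
      induction k with
      | zero => rfl
      | succ k ih =>
        rw [hg1, ← ih, pref, List.range_succ, List.map_append, ← pref, ih]
        rfl
    have hglen : ∀ k, (g k).length = k := fun k => by rw [← hpref]; simp [pref]
    have horb : ∀ k, Orbital c (live F) (g k) := by
      intro k
      induction k with
      | zero =>
        intro f hf hfw
        have := hfw.length_le
        rw [hglen] at this
        omega
      | succ k ih => exact orbital_concat ih fun _ => hch _
    refine ⟨fun k => ch (g k), Or.inr ⟨c, fun i hi => ?_, fun i hi => ?_⟩⟩
    · rw [hpref]
      exact label_eq_three hcard (htr (i + 1) hi) (hglen i) _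
    · rw [hpref]
      have ho : Orbital c (live F) (g i ++ [ch (g i)]) := horb (i + 1)
      obtain ⟨z, hz, hzne⟩ := hdead i (g i) (ch (g i)) (hglen i) hi ho
      have hoz := orbital_of_inOrbit hrev hO ho hz
      have hil : c ≤ (g i).length := by rw [hglen]; exact hi
      have hset : {x : Q | InOrbit δ ρ (g i ++ [ch (g i)]) (g i ++ [x])} = {ch (g i), z} := by
        ext x
        simp only [Set.mem_ofPred_eq, Set.mem_insert_iff, Set.mem_singleton_iff]
        constructor
        · intro hx
          have hsx := hsing _ _ hil (orbital_of_inOrbit hrev hO ho hx)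
          rcases eq_or_eq_or_eq_of_card_three hcard hzne.symm (hsing _ _ hil ho)
            (hsing _ _ hil hoz) x with h | h | h
          · exact Or.inl h
          · exact Or.inr h
          · exact absurd h hsx
        · rintro (rfl | rfl)
          · exact InOrbit.refl _
          · exact hz
      rw [label, hset, Set.ncard_pair hzne.symm]

end MealyFormal
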